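/- arXiv:1111.3787 — 2 statements merged into one kernel-verified Lean document; each statement's English description precedes it below -/
import Mathlib

section
/- With K = ℚ(ζ + ζ^{-1}) for ζ a primitive 2^r-th root of unity (r ≥ 5), n = 2^{r-2}, e_i = ζ^i + ζ^{-i}, and α = 4 + e_1 - 2e_2 - e_3, one has for all integers i, j with 0 < i < j ≤ n - 1: Tr_{K/ℚ}(α e_i e_j) = 2^{r-1} if j - i = 1 and (i,j) ∉ {(1,2), (n-2, n-1)}; Tr_{K/ℚ}(α e_i e_j) = -2^r if j - i = 2; Tr_{K/ℚ}(α e_i e_j) = -2^{r-1} if j - i = 3; Tr_{K/ℚ}(α e_i e_j) = 2^r if (i,j) = (n-2, n-1); and Tr_{K/ℚ}(α e_i e_j) = 0 in all other cases (including (i,j) = (1,2)). -/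
open scoped IntermediateField

/-!
Write `S m = Tr (α (ζ ^ m + ζ ^ (-m)))`. The product formula for `ζ ^ k + ζ ^ (-k)` gives
`Tr (α eᵢ eⱼ) = S (j + i) + S (j - i)`. If `2 ^ (r - 1) ∤ k`, then `4` divides the order of `ζ ^ k`,
so `-ζ ^ k` is conjugate to `ζ ^ k`; hence `ζ ^ k + ζ ^ (-k)` is conjugate to its own negative and
has trace zero. For `0 < m ≤ 2 n - 3` this leaves `S m ≠ 0` only at `m = 1, 2, 3` and `m = 2 n - 3`.
The pairs `(1, 2)` and `(n - 2, n - 1)` are exceptional because there `i + j` reaches `3` and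
`2 n - 3` respectively.
-/

section ConjugateRoots

open Polynomial IntermediateField

variable {F L : Type*} [Field F] [Field L] [Algebra F L]

theorem trace_eq_of_isConjRoot [FiniteDimensional F L] {x y : L} (h : IsConjRoot F x y) :
    Algebra.trace F L x = Algebra.trace F L y := by
  have finrank_eq : Module.finrank F⟮x⟯ L = Module.finrank F⟮y⟯ L := by
    have hx := Module.finrank_mul_finrank F F⟮x⟯ L
    have hy := Module.finrank_mul_finrank F F⟮y⟯ L
    rw [adjoin.finrank (.of_finite F _)] at hx hy
    rw [← hy, h] at hx
    exact Nat.eq_of_mul_eq_mul_left (minpoly.natDegree_pos (.of_finite F y)) hx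
  rw [trace_eq_finrank_mul_minpoly_nextCoeff, trace_eq_finrank_mul_minpoly_nextCoeff, finrank_eq, h]

theorem trace_eq_zero_of_isConjRoot_neg [CharZero F] [FiniteDimensional F L] {x : L}
    (h : IsConjRoot F x (-x)) : Algebra.trace F L x = 0 := by
  rw [← self_eq_neg, ← map_neg]
  exact trace_eq_of_isConjRoot h

theorem exists_algHom_gen_eq_of_isConjRoot {x y : L} (hx : IsIntegral F x)
    (h : IsConjRoot F x y) : ∃ φ : F⟮x⟯ →ₐ[F] L, φ (AdjoinSimple.gen F x) = y :=
  ⟨(algHomAdjoinIntegralEquiv F hx).symm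
      ⟨y, mem_aroots.2 ⟨minpoly.ne_zero hx, h.aeval_eq_zero⟩⟩,
    algHomAdjoinIntegralEquiv_symm_apply_gen F hx _⟩

theorem isConjRoot_add_inv {x y : L} (hx : IsIntegral F x) (h : IsConjRoot F x y) :
    IsConjRoot F (x + x⁻¹) (y + y⁻¹) := by
  obtain ⟨φ, hφ⟩ := exists_algHom_gen_eq_of_isConjRoot hx h
  let g := AdjoinSimple.gen F x
  calc minpoly F (x + x⁻¹) = minpoly F (F⟮x⟯.val (g + g⁻¹)) := by simp [g]
    _ = minpoly F (φ (g + g⁻¹)) := by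
      rw [minpoly.algHom_eq _ φ.injective, minpoly.algHom_eq _ F⟮x⟯.val.injective]
    _ = minpoly F (y + y⁻¹) := by rw [map_add, map_inv₀, hφ]

theorem adjoin_add_inv_le_adjoin (x : L) : F⟮x + x⁻¹⟯ ≤ F⟮x⟯ :=
  adjoin_simple_le_iff.2 <|
    add_mem (mem_adjoin_simple_self F x) (inv_mem (mem_adjoin_simple_self F x))

theorem notMem_adjoin_add_inv {x : L} (hx : IsIntegral F x) (h : IsConjRoot F x x⁻¹)
    (hne : x ≠ x⁻¹) : x ∉ F⟮x + x⁻¹⟯ := by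
  intro hmem
  obtain ⟨φ, hφ⟩ := exists_algHom_gen_eq_of_isConjRoot hx h
  have adjoin_eq : F⟮x⟯ = F⟮x + x⁻¹⟯ :=
    (adjoin_simple_le_iff.2 hmem).antisymm (adjoin_add_inv_le_adjoin x)
  have φ_eq_val : φ = F⟮x⟯.val := by
    refine algHom_ext_of_eq_adjoin F adjoin_eq ?_
    rintro _ rfl
    calc φ _ = φ (AdjoinSimple.gen F x + (AdjoinSimple.gen F x)⁻¹) := rfl
      _ = x + x⁻¹ := by rw [map_add, map_inv₀, hφ, inv_inv, add_comm]
  exact hne (by rw [← hφ, φ_eq_val]; rfl)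

theorem finrank_adjoin_add_inv_mul_two {x : L} (hx : IsIntegral F x) (h : IsConjRoot F x x⁻¹)
    (hne : x ≠ x⁻¹) :
    Module.finrank F F⟮x + x⁻¹⟯ * 2 = Module.finrank F F⟮x⟯ := by
  have hx0 : x ≠ 0 := by rintro rfl; simp at hne
  have natDegree_eq : (minpoly F⟮x + x⁻¹⟯ x).natDegree = 2 := by
    refine le_antisymm ?_ ?_
    · let q : F⟮x + x⁻¹⟯[X] := X ^ 2 - C (AdjoinSimple.gen F (x + x⁻¹)) * X + 1
      have natDegree_q : q.natDegree = 2 := by simp only [q]; compute_degree!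
      have aeval_q : aeval x q = 0 := by
        have aeval_q_eq : aeval x q = x ^ 2 - (x + x⁻¹) * x + 1 := by simp [q]
        rw [aeval_q_eq]
        field_simp
        ring
      rw [← natDegree_q]
      exact natDegree_le_of_dvd (minpoly.dvd _ _ aeval_q) (ne_zero_of_natDegree_gt
        (natDegree_q ▸ two_pos))
    · rw [minpoly.two_le_natDegree_iff hx.tower_top]
      rintro ⟨y, hy⟩
      exact notMem_adjoin_add_inv hx h hne (Set.mem_of_eq_of_mem hy.symm y.2)
  rw [← finrank_bot_mul_relfinrank (adjoin_add_inv_le_adjoin x),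
    relfinrank_eq_finrank_of_le (adjoin_add_inv_le_adjoin x), extendScalars_adjoin,
    adjoin.finrank hx.tower_top, natDegree_eq]

end ConjugateRoots

section RootsOfUnity

open Polynomial IntermediateField

theorem isPrimitiveRoot_neg_of_four_dvd {M : Type*} [CommMonoid M] [HasDistribNeg M] {ζ : M}
    {N : ℕ} (hζ : IsPrimitiveRoot ζ N) (hN : 4 ∣ N) : IsPrimitiveRoot (-ζ) N := by
  have even_N : Even N := even_iff_two_dvd.2 (by omega)
  refine ⟨by rw [even_N.neg_pow, hζ.pow_eq_one], fun l hl => ?_⟩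
  have N_dvd : N ∣ l * 2 := hζ.dvd_of_pow_eq_one _ <| by
    rw [← (even_two.mul_left l).neg_pow, pow_mul, hl, one_pow]
  have even_l : Even l := even_iff_two_dvd.2 (by have := hN.trans N_dvd; omega)
  exact hζ.dvd_of_pow_eq_one l (by rwa [even_l.neg_pow] at hl)

variable {L : Type*} [Field L] [CharZero L]

theorem isConjRoot_rat_of_isPrimitiveRoot {ζ η : L} {N : ℕ} (hN : 0 < N)
    (hζ : IsPrimitiveRoot ζ N) (hη : IsPrimitiveRoot η N) : IsConjRoot ℚ ζ η := by
  rw [isConjRoot_def, ← cyclotomic_eq_minpoly_rat hζ hN, cyclotomic_eq_minpoly_rat hη hN]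

theorem trace_add_inv_eq_zero_of_four_dvd {K : IntermediateField ℚ L} [FiniteDimensional ℚ K]
    {x : K} {ζ : L} {N : ℕ} (hN : 0 < N) (hζ : IsPrimitiveRoot ζ N) (h4 : 4 ∣ N)
    (hx : (x : L) = ζ + ζ⁻¹) : Algebra.trace ℚ K x = 0 := by
  have conj_neg : IsConjRoot ℚ (ζ + ζ⁻¹) (-ζ + (-ζ)⁻¹) :=
    isConjRoot_add_inv (hζ.isIntegral hN).tower_top <|
      isConjRoot_rat_of_isPrimitiveRoot hN hζ (isPrimitiveRoot_neg_of_four_dvd hζ h4)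
  refine trace_eq_zero_of_isConjRoot_neg ((isConjRoot_algHom_iff K.val).1 ?_)
  rwa [map_neg, show K.val x = ζ + ζ⁻¹ from hx, neg_add, ← inv_neg]

theorem finrank_adjoin_add_inv_mul_two_eq_totient {ζ : L} {N : ℕ} (hN : 2 < N)
    (hζ : IsPrimitiveRoot ζ N) : Module.finrank ℚ ℚ⟮ζ + ζ⁻¹⟯ * 2 = N.totient := by
  have N_pos : 0 < N := by omega
  have hint : IsIntegral ℚ ζ := (hζ.isIntegral N_pos).tower_top
  have ne_inv : ζ ≠ ζ⁻¹ := fun h => hζ.pow_ne_one_of_pos_of_lt two_ne_zero hN <| by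
    rw [sq]
    nth_rw 2 [h]
    exact mul_inv_cancel₀ (hζ.ne_zero N_pos.ne')
  have conj_inv : IsConjRoot ℚ ζ ζ⁻¹ := isConjRoot_rat_of_isPrimitiveRoot N_pos hζ hζ.inv
  rw [finrank_adjoin_add_inv_mul_two hint conj_inv ne_inv, adjoin.finrank hint,
    ← cyclotomic_eq_minpoly_rat hζ N_pos, natDegree_cyclotomic]

end RootsOfUnity

section ZPowAddZPowNeg

open Polynomial IntermediateField

theorem eval_chebyshevC_add_inv {F : Type*} [Field F] {x : F} (hx : x ≠ 0) (k : ℤ) :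
    (Chebyshev.C F k).eval (x + x⁻¹) = x ^ k + x ^ (-k) := by
  have eval_nat (m : ℕ) : (Chebyshev.C F m).eval (x + x⁻¹) = x ^ m + (x ^ m)⁻¹ := by
    rw [← dickson_one_one_eq_chebyshev_C, dickson_one_one_eval_add_inv _ _ (mul_inv_cancel₀ hx),
      inv_pow]
  obtain ⟨m, rfl | rfl⟩ := k.eq_nat_or_neg
  · simpa using eval_nat m
  · simpa [add_comm] using eval_nat m

variable (F : Type*) {L : Type*} [Field F] [Field L] [Algebra F L]

/-- The element `ζ ^ k + ζ ^ (-k)` of `F(ζ + ζ⁻¹)`, encoded as the value at `ζ + ζ⁻¹` of the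
rescaled Chebyshev polynomial `C k`; it is `2`, not `1`, for `k = 0`. -/
noncomputable def zpowAddZPowNeg (ζ : L) (k : ℤ) : F⟮ζ + ζ⁻¹⟯ :=
  (Chebyshev.C _ k).eval (AdjoinSimple.gen F (ζ + ζ⁻¹))

theorem coe_zpowAddZPowNeg {ζ : L} (hζ : ζ ≠ 0) (k : ℤ) :
    (zpowAddZPowNeg F ζ k : L) = ζ ^ k + ζ ^ (-k) := by
  rw [← eval_chebyshevC_add_inv hζ]
  exact Chebyshev.algebraMap_eval_C (R' := L) (AdjoinSimple.gen F (ζ + ζ⁻¹)) k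

theorem zpowAddZPowNeg_zero (ζ : L) : zpowAddZPowNeg F ζ 0 = 2 := by
  simp [zpowAddZPowNeg]

theorem zpowAddZPowNeg_mul (ζ : L) (k l : ℤ) :
    zpowAddZPowNeg F ζ k * zpowAddZPowNeg F ζ l =
      zpowAddZPowNeg F ζ (k + l) + zpowAddZPowNeg F ζ (k - l) := by
  simp only [zpowAddZPowNeg, ← eval_mul, ← eval_add, Chebyshev.C_mul_C]

end ZPowAddZPowNeg

section TwoPower

variable {L : Type*} [Field L] [CharZero L] {ζ : L} {s : ℕ}

theorem finrank_adjoin_add_inv_of_two_pow (hζ : IsPrimitiveRoot ζ (2 ^ (s + 2))) :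
    Module.finrank ℚ ℚ⟮ζ + ζ⁻¹⟯ = 2 ^ s := by
  have two_lt : 2 < 2 ^ (s + 2) := lt_self_pow₀ one_lt_two (by omega)
  have h := finrank_adjoin_add_inv_mul_two_eq_totient two_lt hζ
  rw [Nat.totient_prime_pow_succ Nat.prime_two, pow_succ] at h
  omega

theorem trace_zpowAddZPowNeg_zero (hζ : IsPrimitiveRoot ζ (2 ^ (s + 2))) :
    Algebra.trace ℚ _ (zpowAddZPowNeg ℚ ζ 0) = 2 ^ (s + 1) := by
  rw [zpowAddZPowNeg_zero, ← map_ofNat (algebraMap ℚ ℚ⟮ζ + ζ⁻¹⟯) 2, Algebra.trace_algebraMap,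
    finrank_adjoin_add_inv_of_two_pow hζ, nsmul_eq_mul, pow_succ, Nat.cast_pow, Nat.cast_ofNat]

theorem trace_zpowAddZPowNeg_two_pow (hζ : IsPrimitiveRoot ζ (2 ^ (s + 2))) :
    Algebra.trace ℚ _ (zpowAddZPowNeg ℚ ζ (2 ^ (s + 1))) = -2 ^ (s + 1) := by
  have pow_eq : ζ ^ (2 ^ (s + 1)) = -1 :=
    (hζ.pow (by positivity) (pow_succ 2 (s + 1))).eq_neg_one_of_two_right
  have zpow_eq : ζ ^ ((2 : ℤ) ^ (s + 1)) = -1 := by exact_mod_cast pow_eq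
  have h : zpowAddZPowNeg ℚ ζ (2 ^ (s + 1)) = -zpowAddZPowNeg ℚ ζ 0 := by
    refine Subtype.ext ?_
    have hζ0 := hζ.ne_zero (by positivity)
    rw [NegMemClass.coe_neg, coe_zpowAddZPowNeg _ hζ0, coe_zpowAddZPowNeg _ hζ0, zpow_neg, zpow_eq]
    norm_num
  rw [h, map_neg, trace_zpowAddZPowNeg_zero hζ]

theorem trace_zpowAddZPowNeg_eq_zero (hζ : IsPrimitiveRoot ζ (2 ^ (s + 2))) {k : ℤ}
    (hk : ¬ (2 : ℤ) ^ (s + 1) ∣ k) : Algebra.trace ℚ _ (zpowAddZPowNeg ℚ ζ k) = 0 := by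
  have pow_eq_one : (ζ ^ k) ^ 2 ^ (s + 2) = 1 := by
    rw [← zpow_natCast, zpow_comm, zpow_natCast, hζ.pow_eq_one, one_zpow]
  have sq_ne_one : (ζ ^ k) ^ 2 ≠ 1 := fun h => hk <| by
    rw [← zpow_natCast, ← zpow_mul, hζ.zpow_eq_one_iff_dvd] at h
    push_cast at h
    exact Int.dvd_of_mul_dvd_mul_right two_ne_zero h
  have four_dvd : 4 ∣ orderOf (ζ ^ k) := by
    obtain ⟨t, -, ht⟩ := (Nat.dvd_prime_pow Nat.prime_two).1 (orderOf_dvd_of_pow_eq_one pow_eq_one)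
    have two_le : 2 ≤ t := by
      by_contra! h
      exact sq_ne_one (orderOf_dvd_iff_pow_eq_one.1 (ht ▸ pow_dvd_pow 2 (Nat.le_of_lt_succ h)))
    exact ht ▸ pow_dvd_pow 2 two_le
  have : FiniteDimensional ℚ ℚ⟮ζ + ζ⁻¹⟯ :=
    .of_finrank_pos (finrank_adjoin_add_inv_of_two_pow hζ ▸ by positivity)
  refine trace_add_inv_eq_zero_of_four_dvd ?_ (.orderOf _) four_dvd ?_
  · exact orderOf_pos_iff.2 (isOfFinOrder_iff_pow_eq_one.2 ⟨_, by positivity, pow_eq_one⟩)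
  · rw [coe_zpowAddZPowNeg _ (hζ.ne_zero (by positivity)), zpow_neg]

theorem trace_zpowAddZPowNeg (hζ : IsPrimitiveRoot ζ (2 ^ (s + 2))) {k : ℤ}
    (hk : -2 ^ (s + 1) < k) (hk' : k < 2 ^ (s + 2)) :
    Algebra.trace ℚ _ (zpowAddZPowNeg ℚ ζ k) =
      if k = 0 then 2 ^ (s + 1) else if k = 2 ^ (s + 1) then -2 ^ (s + 1) else 0 := by
  split_ifs with h0 h1
  · rw [h0, trace_zpowAddZPowNeg_zero hζ]
  · rw [h1, trace_zpowAddZPowNeg_two_pow hζ]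
  · refine trace_zpowAddZPowNeg_eq_zero hζ ?_
    rintro ⟨c, rfl⟩
    have M_pos : (0 : ℤ) < 2 ^ (s + 1) := by positivity
    have neg_one_lt : -1 < c := by nlinarith
    have lt_two : c < 2 := by rw [pow_succ _ (s + 1)] at hk'; nlinarith
    interval_cases c <;> simp at h0 h1

theorem trace_alpha_mul_zpowAddZPowNeg (hζ : IsPrimitiveRoot ζ (2 ^ (s + 2))) (hs : 2 ≤ s)
    {m : ℤ} (hm : 0 < m) (hm' : m ≤ 2 ^ (s + 1) - 3) :
    Algebra.trace ℚ _ ((4 + zpowAddZPowNeg ℚ ζ 1 - 2 * zpowAddZPowNeg ℚ ζ 2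
      - zpowAddZPowNeg ℚ ζ 3) * zpowAddZPowNeg ℚ ζ m) =
      if m = 1 ∨ m = 2 ^ (s + 1) - 3 then 2 ^ (s + 1)
      else if m = 2 then -2 ^ (s + 2)
      else if m = 3 then -2 ^ (s + 1)
      else 0 := by
  let c := zpowAddZPowNeg ℚ ζ
  have eight_le : (2 : ℤ) ^ 3 ≤ 2 ^ (s + 1) := pow_le_pow_right₀ one_le_two (by omega)
  have expand : (4 + c 1 - 2 * c 2 - c 3) * c m =
      (4 : ℚ) • c m + (c (m + 1) + c (m - 1)) - (2 : ℚ) • (c (m + 2) + c (m - 2))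
        - (c (m + 3) + c (m - 3)) := by
    simp only [c, ← zpowAddZPowNeg_mul, Algebra.smul_def, map_ofNat]
    ring
  have trace_eq {k : ℤ} (hk : m - 3 ≤ k) (hk' : k ≤ m + 3) : Algebra.trace ℚ _ (c k) =
      if k = 0 then 2 ^ (s + 1) else if k = 2 ^ (s + 1) then -2 ^ (s + 1) else 0 :=
    trace_zpowAddZPowNeg hζ (by omega) (by rw [pow_succ _ (s + 1)]; omega)
  have trace_eq_zero {k : ℤ} (hk : m ≤ k) (hk' : k ≤ m + 2) : Algebra.trace ℚ _ (c k) = 0 := by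
    rw [trace_eq (by omega) (by omega), if_neg (by omega), if_neg (by omega)]
  calc Algebra.trace ℚ _ ((4 + c 1 - 2 * c 2 - c 3) * c m)
    _ = Algebra.trace ℚ _ (c (m - 1)) - 2 * Algebra.trace ℚ _ (c (m - 2))
        - Algebra.trace ℚ _ (c (m - 3)) - Algebra.trace ℚ _ (c (m + 3)) := by
      simp only [expand, map_add, map_sub, map_smul, smul_eq_mul]
      rw [trace_eq_zero le_rfl (by omega), trace_eq_zero (k := m + 1) (by omega) (by omega),
        trace_eq_zero (k := m + 2) (by omega) le_rfl]
      ring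
    _ = _ := by
      rw [trace_eq (k := m - 1) (by omega) (by omega), trace_eq (k := m - 2) (by omega) (by omega),
        trace_eq (k := m - 3) le_rfl (by omega), trace_eq (k := m + 3) (by omega) le_rfl]
      split_ifs <;> first | omega | ring

end TwoPower

theorem trace_alpha_ei_ej_general {L : Type*} [Field L] [CharZero L] {r n : ℕ}
    (hn : n = 2 ^ (r - 2)) {ζ : L} (hζ : IsPrimitiveRoot ζ (2 ^ r)) {e : ℕ → ℚ⟮ζ + ζ⁻¹⟯}
    (he : ∀ i : ℕ, 1 ≤ i → (e i : L) = ζ ^ i + ζ⁻¹ ^ i)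
    {α : ℚ⟮ζ + ζ⁻¹⟯} (hα : α = 4 + e 1 - 2 * e 2 - e 3)
    {i j : ℕ} (hi : 0 < i) (hij : i < j) (hj : j ≤ n - 1) :
    (j - i = 1 ∧ ¬(i = 1 ∧ j = 2) ∧ ¬(i = n - 2 ∧ j = n - 1) →
      Algebra.trace ℚ ℚ⟮ζ + ζ⁻¹⟯ (α * e i * e j) = 2 ^ (r - 1)) ∧
    (j - i = 2 → Algebra.trace ℚ ℚ⟮ζ + ζ⁻¹⟯ (α * e i * e j) = -2 ^ r) ∧
    (j - i = 3 → Algebra.trace ℚ ℚ⟮ζ + ζ⁻¹⟯ (α * e i * e j) = -2 ^ (r - 1)) ∧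
    (i = n - 2 ∧ j = n - 1 → Algebra.trace ℚ ℚ⟮ζ + ζ⁻¹⟯ (α * e i * e j) = 2 ^ r) ∧
    (¬(j - i = 1 ∧ ¬(i = 1 ∧ j = 2) ∧ ¬(i = n - 2 ∧ j = n - 1)) ∧
        j - i ≠ 2 ∧ j - i ≠ 3 ∧ ¬(i = n - 2 ∧ j = n - 1) →
      Algebra.trace ℚ ℚ⟮ζ + ζ⁻¹⟯ (α * e i * e j) = 0) := by
  have two_le : 2 ≤ r - 2 :=
    (Nat.pow_lt_pow_iff_right one_lt_two).1 (by omega : 2 ^ 1 < 2 ^ (r - 2))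
  obtain ⟨s, rfl⟩ : ∃ s, r = s + 2 := ⟨r - 2, by omega⟩
  rw [Nat.add_sub_cancel] at hn two_le
  have two_pow_eq : (2 : ℤ) ^ (s + 1) = 2 * n := by rw [hn]; push_cast; ring
  have e_eq (k : ℕ) (hk : 1 ≤ k) : e k = zpowAddZPowNeg ℚ ζ k := Subtype.ext <| by
    rw [he k hk, coe_zpowAddZPowNeg ℚ (hζ.ne_zero (by positivity)), zpow_neg, zpow_natCast, inv_pow]
  have trace_eq : Algebra.trace ℚ ℚ⟮ζ + ζ⁻¹⟯ (α * e i * e j) =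
      Algebra.trace ℚ _ (α * zpowAddZPowNeg ℚ ζ (j + i)) +
        Algebra.trace ℚ _ (α * zpowAddZPowNeg ℚ ζ (j - i)) := by
    rw [← map_add, ← mul_add, ← zpowAddZPowNeg_mul, e_eq i hi, e_eq j (by omega), mul_assoc,
      mul_comm (zpowAddZPowNeg ℚ ζ i)]
  rw [trace_eq, hα, e_eq 1 le_rfl, e_eq 2 one_le_two, e_eq 3 (by norm_num)]
  push_cast
  rw [trace_alpha_mul_zpowAddZPowNeg hζ two_le (by omega) (by omega),
    trace_alpha_mul_zpowAddZPowNeg hζ two_le (by omega) (by omega), two_pow_eq]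
  refine ⟨fun h => ?_, fun h => ?_, fun h => ?_, fun h => ?_, fun h => ?_⟩ <;>
    split_ifs <;> first | omega | ring

/-- With `K = ℚ(ζ + ζ⁻¹)` for `ζ` a primitive `2^r`-th root of
unity (`r ≥ 5`), `n = 2^{r-2}`, `eᵢ = ζ^i + ζ^{-i}`, and `α = 4 + e₁ - 2e₂ - e₃`,
for all `0 < i < j ≤ n - 1`: `Tr(α eᵢ eⱼ) = 2^{r-1}` if `j - i = 1` and
`(i,j) ∉ {(1,2), (n-2,n-1)}`; `= -2^r` if `j - i = 2`; `= -2^{r-1}` if `j - i = 3`;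
`= 2^r` if `(i,j) = (n-2, n-1)`; and `= 0` in all other cases. -/
theorem trace_alpha_ei_ej
    (r n : ℕ) (hr : 5 ≤ r) (hn : n = 2 ^ (r - 2))
    (ζ : ℂ) (hζ : IsPrimitiveRoot ζ (2 ^ r))
    (e : ℕ → ℚ⟮ζ + ζ⁻¹⟯) (he0 : e 0 = 1)
    (he : ∀ i : ℕ, 1 ≤ i → ((e i : ℂ) = ζ ^ i + ζ⁻¹ ^ i))
    (α : ℚ⟮ζ + ζ⁻¹⟯) (hα : α = 4 + e 1 - 2 * e 2 - e 3)
    (i j : ℕ) (hij : 0 < i ∧ i < j ∧ j ≤ n - 1) :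
    (j - i = 1 ∧ ¬(i = 1 ∧ j = 2) ∧ ¬(i = n - 2 ∧ j = n - 1) →
      Algebra.trace ℚ ℚ⟮ζ + ζ⁻¹⟯ (α * e i * e j) = 2 ^ (r - 1)) ∧
    (j - i = 2 → Algebra.trace ℚ ℚ⟮ζ + ζ⁻¹⟯ (α * e i * e j) = -2 ^ r) ∧
    (j - i = 3 → Algebra.trace ℚ ℚ⟮ζ + ζ⁻¹⟯ (α * e i * e j) = -2 ^ (r - 1)) ∧
    (i = n - 2 ∧ j = n - 1 → Algebra.trace ℚ ℚ⟮ζ + ζ⁻¹⟯ (α * e i * e j) = 2 ^ r) ∧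
    (¬(j - i = 1 ∧ ¬(i = 1 ∧ j = 2) ∧ ¬(i = n - 2 ∧ j = n - 1)) ∧
        j - i ≠ 2 ∧ j - i ≠ 3 ∧ ¬(i = n - 2 ∧ j = n - 1) →
      Algebra.trace ℚ ℚ⟮ζ + ζ⁻¹⟯ (α * e i * e j) = 0) := by
  exact trace_alpha_ei_ej_general hn hζ he hα hij.1 hij.2.1 hij.2.2
end

section
/- Let p ≥ 7 be a prime, n = (p-1)/2, ζ a primitive p-th root of unity in ℂ, K = ℚ(ζ + ζ^{-1}), O_K = ℤ[ζ + ζ^{-1}], e_j = ζ^j + ζ^{-j}, α = 2 - e_1, and σ_1, …, σ_n the real embeddings of K. Let I be the ℤ-submodule of O_K spanned by {e_1, e_2, …, e_{n-1}, 2e_n}. Then the set { ∏_{i=1}^{n} √(σ_i(α)/(2p)) · |σ_i(y)| : y ∈ I, y ≠ 0 } has a least element, equal to 2^{(1-p)/4} · p^{(3-p)/4}. (This is the relative minimum product distance of the rotated D_n-lattice (1/√p)σ_α(I), after rescaling to unit minimum norm.) -/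
open scoped IntermediateField

/-!
Let `K = ℚ(t)` with `t = ζ + ζ⁻¹`, and `L = ℚ(ζ)`. Over the totally real field `K`, the element
`ζ - 1` is a root of the irreducible polynomial `X² - (t - 2) X + (2 - t)`; hence `[L : K] = 2`
and `N_{L/K}(ζ - 1) = 2 - t`. Consequently `K` has degree `(p - 1) / 2`, and `2 - t` has norm
`N_{L/ℚ}(ζ - 1) = p`. So the product attached to `y` is `√(p / (2 p) ^ ((p - 1) / 2)) * |N y|`.
A nonzero algebraic integer has `|N y| ≥ 1`, with equality at units, and `t = ζ⁻¹ (1 + ζ²)` is a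
unit, being associated to the cyclotomic unit `(ζ⁴ - 1) / (ζ² - 1)`.
-/

open IntermediateField NumberField

section QuadraticElement

open Polynomial

variable {F E : Type*} [Field F] [Field E] [Algebra F E] {x : E} {a b : F}

theorem isIntegral_of_quadratic (h : x ^ 2 - algebraMap F E a * x + algebraMap F E b = 0) :
    IsIntegral F x :=
  ⟨X ^ 2 - C a * X + C b, by monicity!, by simpa using h⟩

theorem minpoly_eq_of_quadratic (h : x ^ 2 - algebraMap F E a * x + algebraMap F E b = 0)
    (hx : x ∉ (algebraMap F E).range) : minpoly F x = X ^ 2 - C a * X + C b := by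
  have hint := isIntegral_of_quadratic h
  have hmonic : (X ^ 2 - C a * X + C b).Monic := by monicity!
  have hdeg : (X ^ 2 - C a * X + C b).natDegree = 2 := by compute_degree!
  have hdvd : minpoly F x ∣ X ^ 2 - C a * X + C b := minpoly.dvd F x (by simpa using h)
  exact (eq_of_monic_of_dvd_of_natDegree_le (minpoly.monic hint) hmonic hdvd <|
    hdeg.trans_le ((minpoly.two_le_natDegree_iff hint).2 hx)).symm

theorem finrank_eq_two_of_quadratic
    (h : x ^ 2 - algebraMap F E a * x + algebraMap F E b = 0)
    (hx : x ∉ (algebraMap F E).range) (hgen : Algebra.adjoin F {x} = ⊤) :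
    Module.finrank F E = 2 := by
  rw [(PowerBasis.ofAdjoinEqTop (isIntegral_of_quadratic h) hgen).finrank,
    PowerBasis.ofAdjoinEqTop_dim, minpoly_eq_of_quadratic h hx]
  compute_degree!

theorem norm_eq_of_quadratic
    (h : x ^ 2 - algebraMap F E a * x + algebraMap F E b = 0)
    (hx : x ∉ (algebraMap F E).range) (hgen : Algebra.adjoin F {x} = ⊤) :
    Algebra.norm F x = b := by
  let B := PowerBasis.ofAdjoinEqTop (isIntegral_of_quadratic h) hgen
  have hdim : B.dim = 2 := B.finrank.symm.trans (finrank_eq_two_of_quadratic h hx hgen)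
  have hnorm := Algebra.PowerBasis.norm_gen_eq_coeff_zero_minpoly B
  rw [hdim, PowerBasis.ofAdjoinEqTop_gen, minpoly_eq_of_quadratic h hx] at hnorm
  simpa using hnorm

end QuadraticElement

section RootOfUnity

variable {K L : Type*} [Field K] [Field L] [Algebra K L] [Algebra.IsAlgebraic K L]
  {m : ℕ} {ζ : L} {t : K}

theorem exists_embedding_add_inv_eq_ofReal (hm : m ≠ 0) (hζ : ζ ^ m = 1)
    (ht : algebraMap K L t = ζ + ζ⁻¹) (φ : K →+* ℂ) : ∃ r : ℝ, r ≤ 2 ∧ φ t = r := by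
  set z := ComplexEmbedding.lift L φ ζ with hz_def
  have hz : ‖z‖ = 1 :=
    Complex.norm_eq_one_of_pow_eq_one (by rw [← map_pow, hζ, map_one]) hm
  refine ⟨2 * z.re, by linarith [Complex.re_le_norm z], ?_⟩
  rw [← ComplexEmbedding.lift_algebraMap_apply L φ, ht, map_add, map_inv₀, ← hz_def,
    Complex.inv_eq_conj hz, Complex.add_conj]

theorem realEmbedding_add_inv_le_two (hm : m ≠ 0) (hζ : ζ ^ m = 1)
    (ht : algebraMap K L t = ζ + ζ⁻¹) (τ : K →+* ℝ) : τ t ≤ 2 := by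
  obtain ⟨r, hr, h⟩ := exists_embedding_add_inv_eq_ofReal hm hζ ht (Complex.ofRealHom.comp τ)
  exact (Complex.ofReal_injective h).trans_le hr

theorem isTotallyReal_of_adjoin_add_inv_eq_top [CharZero K] [Algebra.IsAlgebraic ℚ K]
    (hm : m ≠ 0) (hζ : ζ ^ m = 1) (ht : algebraMap K L t = ζ + ζ⁻¹) (hgen : ℚ⟮t⟯ = ⊤) :
    IsTotallyReal K := by
  have hmem : t ∈ maximalRealSubfield K := fun φ ↦ by
    obtain ⟨r, -, h⟩ := exists_embedding_add_inv_eq_ofReal hm hζ ht φ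
    rw [h]
    exact Complex.conj_ofReal r
  have hle : ℚ⟮t⟯ ≤ (maximalRealSubfield K).toIntermediateField (by simp) :=
    adjoin_simple_le_iff.2 hmem
  rw [← maximalRealSubfield_eq_top_iff_isTotallyReal, eq_top_iff]
  exact fun x _ ↦ hle (hgen ▸ mem_top)

end RootOfUnity

section Adjoin

variable (F : Type*) {E : Type*} [Field F] [Field E] [Algebra F E]

theorem adjoin_adjoinSimple_gen_eq_top (z : E) : F⟮AdjoinSimple.gen F z⟯ = ⊤ :=
  lift_injective _ (by simp)

theorem adjoin_add_inv_le (z : E) : F⟮z + z⁻¹⟯ ≤ F⟮z⟯ :=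
  adjoin_simple_le_iff.2 <|
    add_mem (mem_adjoin_simple_self F z) (inv_mem (mem_adjoin_simple_self F z))

theorem isCyclotomicExtension_adjoin_simple {m : ℕ} [NeZero m] {ζ : E}
    (hζ : IsPrimitiveRoot ζ m) : IsCyclotomicExtension {m} F F⟮ζ⟯ := by
  have halg : IsAlgebraic F ζ := (hζ.isIntegral (NeZero.pos m)).tower_top.isAlgebraic
  change IsCyclotomicExtension {m} F F⟮ζ⟯.toSubalgebra
  rw [adjoin_simple_toSubalgebra_of_isAlgebraic halg]
  exact hζ.adjoin_isCyclotomicExtension F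

end Adjoin

section MaximalRealSubfield

variable {K L : Type*} [Field K] [Field L] [Algebra K L] {m p : ℕ} {ζ : L} {t : K}

theorem quadratic_sub_one_of_add_inv (hζ : ζ ≠ 0) (ht : algebraMap K L t = ζ + ζ⁻¹) :
    (ζ - 1) ^ 2 - algebraMap K L (t - 2) * (ζ - 1) + algebraMap K L (2 - t) = 0 := by
  simp only [map_sub, map_ofNat, ht]
  field_simp
  ring

variable [NumberField K]

theorem sub_one_notMem_range_algebraMap [IsTotallyReal K] (hζ : IsPrimitiveRoot ζ m)
    (hm : 2 < m) : ζ - 1 ∉ (algebraMap K L).range := by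
  intro h
  obtain ⟨x, rfl⟩ : ζ ∈ (algebraMap K L).range := by simpa using add_mem h (one_mem _)
  have hx : IsPrimitiveRoot x m := hζ.of_map_of_injective (algebraMap K L).injective
  have hreal := InfinitePlace.IsPrimitiveRoot.nrRealPlaces_eq_zero_of_two_lt hm hx
  rw [← IsTotallyReal.finrank] at hreal
  exact Module.finrank_pos.ne' hreal

variable [CharZero L]

theorem adjoin_sub_one_eq_top [NeZero m] [IsCyclotomicExtension {m} ℚ L]
    (hζ : IsPrimitiveRoot ζ m) : Algebra.adjoin K {ζ - 1} = ⊤ := by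
  have hgen : Algebra.adjoin ℚ {ζ - 1} = ⊤ := (hζ.subOnePowerBasis ℚ).adjoin_gen_eq_top
  rw [← Algebra.adjoin_adjoin_of_tower ℚ, hgen, Algebra.coe_top, Algebra.adjoin_univ]

variable [IsTotallyReal K]

theorem two_mul_finrank_eq_totient [IsCyclotomicExtension {m} ℚ L]
    (hζ : IsPrimitiveRoot ζ m) (hm : 2 < m) (ht : algebraMap K L t = ζ + ζ⁻¹) :
    2 * Module.finrank ℚ K = m.totient := by
  have : NeZero m := ⟨by lia⟩
  have hquad : Module.finrank K L = 2 :=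
    finrank_eq_two_of_quadratic (quadratic_sub_one_of_add_inv (hζ.ne_zero (by lia)) ht)
      (sub_one_notMem_range_algebraMap hζ hm) (adjoin_sub_one_eq_top hζ)
  have hirr := Polynomial.cyclotomic.irreducible_rat (NeZero.pos m)
  rw [← IsCyclotomicExtension.finrank L hirr, ← Module.finrank_mul_finrank ℚ K L, hquad, mul_comm]

theorem norm_two_sub_add_inv [hp : Fact p.Prime] [IsCyclotomicExtension {p} ℚ L]
    (hζ : IsPrimitiveRoot ζ p) (hp2 : p ≠ 2) (ht : algebraMap K L t = ζ + ζ⁻¹) :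
    Algebra.norm ℚ (2 - t) = p := by
  have hrel : Algebra.norm K (ζ - 1) = 2 - t :=
    norm_eq_of_quadratic (quadratic_sub_one_of_add_inv (hζ.ne_zero hp.out.ne_zero) ht)
      (sub_one_notMem_range_algebraMap hζ (hp.out.two_le.lt_of_ne' hp2)) (adjoin_sub_one_eq_top hζ)
  have hirr := Polynomial.cyclotomic.irreducible_rat hp.out.pos
  rw [← hrel, Algebra.norm_norm, hζ.norm_sub_one_of_prime_ne_two' hirr hp2]

end MaximalRealSubfield

theorem isIntegral_of_mem_span {R A : Type*} [CommRing R] [CommRing A] [Algebra R A]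
    {s : Set A} (hs : ∀ x ∈ s, IsIntegral R x) {y : A} (hy : y ∈ Submodule.span R s) :
    IsIntegral R y :=
  Submodule.span_le (p := Subalgebra.toSubmodule (integralClosure R A)) |>.2 hs hy

section Units

variable {m : ℕ}

theorem isUnit_one_add_sq {A : Type*} [CommRing A] [IsDomain A] {ζ : A}
    (hζ : IsPrimitiveRoot ζ m) (hm : Odd m) (hm1 : 1 < m) : IsUnit (1 + ζ ^ 2) := by
  simpa [Finset.sum_range_succ] using
    (hζ.pow_of_coprime 2 hm.coprime_two_left).geom_sum_isUnit hm1 hm.coprime_two_left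

theorem exists_isIntegral_add_inv_mul_eq_one {F : Type*} [Field F] {ζ : F}
    (hζ : IsPrimitiveRoot ζ m) (hm : Odd m) (hm1 : 1 < m) :
    ∃ v, IsIntegral ℤ v ∧ (ζ + ζ⁻¹) * v = 1 := by
  have : NeZero m := ⟨by lia⟩
  obtain ⟨v, hv⟩ := (isUnit_one_add_sq hζ.toInteger_isPrimitiveRoot hm hm1).exists_right_inv
  have hv' : (1 + ζ ^ 2) * (v : F) = 1 := congrArg RingOfIntegers.val hv
  have h0 : ζ ≠ 0 := hζ.ne_zero (by lia)
  refine ⟨ζ * v, (hζ.isIntegral (by lia)).mul v.isIntegral_coe, ?_⟩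
  rw [← hv']
  field_simp
  ring

variable {K L : Type*} [Field K] [Field L] [Algebra K L] {ζ : L} {x : K}

theorem isIntegral_of_algebraMap_eq_pow_add_inv_pow (hm : 0 < m) (hζ : IsPrimitiveRoot ζ m)
    {j : ℕ} (hx : algebraMap K L x = ζ ^ j + ζ⁻¹ ^ j) : IsIntegral ℤ x := by
  rw [← isIntegral_algebraMap_iff (algebraMap K L).injective, hx]
  exact ((hζ.isIntegral hm).pow j).add ((hζ.inv.isIntegral hm).pow j)

theorem exists_units_coe_eq_of_add_inv (hζ : IsPrimitiveRoot ζ m) (hm : Odd m) (hm1 : 1 < m)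
    (hx : algebraMap K L x = ζ + ζ⁻¹) : ∃ u : (𝓞 K)ˣ, (u : K) = x := by
  obtain ⟨v, hv, hxv⟩ := exists_isIntegral_add_inv_mul_eq_one hζ hm hm1
  rw [← hx] at hxv
  have hx0 : x ≠ 0 := by
    rintro rfl
    simp at hxv
  have hx_int : IsIntegral ℤ x :=
    isIntegral_of_algebraMap_eq_pow_add_inv_pow (j := 1) (by lia) hζ (by simpa using hx)
  have hinv_int : IsIntegral ℤ x⁻¹ := by
    rwa [← isIntegral_algebraMap_iff (algebraMap K L).injective, map_inv₀,
      inv_eq_of_mul_eq_one_right hxv]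
  have hmul : (⟨x, hx_int⟩ * ⟨x⁻¹, hinv_int⟩ : 𝓞 K) = 1 :=
    RingOfIntegers.ext (mul_inv_cancel₀ hx0)
  exact ⟨Units.mkOfMulEqOne _ _ hmul, rfl⟩

end Units

section TotallyReal

variable {K ι : Type*} [Field K] [NumberField K]

theorem one_le_abs_norm_of_isIntegral {y : K} (hy : IsIntegral ℤ y) (h0 : y ≠ 0) :
    1 ≤ |Algebra.norm ℚ y| := by
  obtain ⟨y, rfl⟩ : ∃ z : 𝓞 K, (z : K) = y := ⟨⟨y, hy⟩, rfl⟩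
  rw [← Algebra.coe_norm_int]
  exact_mod_cast Int.one_le_abs (Algebra.norm_ne_zero_iff.2 (RingOfIntegers.coe_ne_zero_iff.1 h0))

variable [IsTotallyReal K] {σ : ι → K →+* ℝ}

theorem bijective_ofRealHom_comp (hσ : Function.Bijective σ) :
    Function.Bijective fun i ↦ (Complex.ofRealHom.comp (σ i)).toRatAlgHom := by
  refine ⟨fun i j hij ↦ hσ.1 (RingHom.ext fun x ↦ ?_), fun φ ↦ ?_⟩
  · exact Complex.ofReal_injective (DFunLike.congr_fun hij x)
  · have hφ := IsTotallyReal.complexEmbedding_isReal (φ : K →+* ℂ)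
    obtain ⟨i, hi⟩ := hσ.2 hφ.embedding
    refine ⟨i, AlgHom.ext fun x ↦ ?_⟩
    change ((σ i x : ℝ) : ℂ) = φ x
    rw [hi]
    exact hφ.coe_embedding_apply x

variable [Fintype ι]

theorem prod_realEmbeddings_eq_norm (hσ : Function.Bijective σ) (y : K) :
    ∏ i, σ i y = Algebra.norm ℚ y := by
  have h := Algebra.norm_eq_prod_embeddings ℚ ℂ y
  rw [← (bijective_ofRealHom_comp hσ).prod_comp (fun φ : K →ₐ[ℚ] ℂ ↦ φ y)] at h
  apply Complex.ofReal_injective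
  push_cast
  exact h.symm

theorem card_realEmbeddings_eq_finrank (hσ : Function.Bijective σ) :
    Fintype.card ι = Module.finrank ℚ K := by
  rw [← AlgHom.card ℚ K ℂ]
  exact Fintype.card_of_bijective (bijective_ofRealHom_comp hσ)

theorem prod_sqrt_mul_abs_eq_sqrt_norm_mul_abs_norm (hσ : Function.Bijective σ) {α : K}
    (hα : ∀ i, 0 ≤ σ i α) {c : ℝ} (hc : 0 ≤ c) (y : K) :
    ∏ i, √(σ i α / c) * |σ i y| =
      √(Algebra.norm ℚ α / c ^ Module.finrank ℚ K) * |Algebra.norm ℚ y| := by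
  rw [Finset.prod_mul_distrib, ← Finset.abs_prod,
    ← Real.sqrt_prod _ fun i _ ↦ div_nonneg (hα i) hc, Finset.prod_div_distrib,
    Finset.prod_const, Finset.card_univ, card_realEmbeddings_eq_finrank hσ,
    prod_realEmbeddings_eq_norm hσ, prod_realEmbeddings_eq_norm hσ, Rat.cast_abs]

theorem isLeast_prod_sqrt_mul_abs (hσ : Function.Bijective σ) {α : K}
    (hα : ∀ i, 0 ≤ σ i α) {c : ℝ} (hc : 0 ≤ c) {S : Set K} (hS : ∀ y ∈ S, IsIntegral ℤ y)
    {u : (𝓞 K)ˣ} (hu : (u : K) ∈ S) :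
    IsLeast {x : ℝ | ∃ y ∈ S, y ≠ 0 ∧ x = ∏ i, √(σ i α / c) * |σ i y|}
      √(Algebra.norm ℚ α / c ^ Module.finrank ℚ K) := by
  simp only [prod_sqrt_mul_abs_eq_sqrt_norm_mul_abs_norm hσ hα hc]
  constructor
  · exact ⟨u, hu, Units.coe_ne_zero u, by rw [Units.norm, Rat.cast_one, mul_one]⟩
  · rintro _ ⟨y, hy, hy0, rfl⟩
    exact le_mul_of_one_le_right (Real.sqrt_nonneg _)
      (mod_cast one_le_abs_norm_of_isIntegral (hS y hy) hy0)

end TotallyReal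

theorem sqrt_div_mul_pow_eq_rpow_mul_rpow {c x : ℝ} (hc : 0 < c) (hx : 0 < x) (d : ℕ) :
    √(x / (c * x) ^ d) = c ^ (-(d : ℝ) / 2) * x ^ ((1 - (d : ℝ)) / 2) := by
  have hsplit : x / (c * x) ^ d = c ^ (-(d : ℝ)) * x ^ (1 - (d : ℝ)) := by
    rw [Real.rpow_sub hx, Real.rpow_one, Real.rpow_neg hc.le, Real.rpow_natCast,
      Real.rpow_natCast, mul_pow]
    field_simp
  rw [hsplit, Real.sqrt_eq_rpow, Real.mul_rpow (by positivity) (by positivity),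
    ← Real.rpow_mul hc.le, ← Real.rpow_mul hx.le, mul_one_div, mul_one_div]

theorem isLeast_prod_sqrt_two_sub_add_inv_mul_abs {K L ι : Type*} [Field K] [CharZero K] [Field L]
    [CharZero L] [Algebra K L] [Fintype ι] {p : ℕ} [hp : Fact p.Prime]
    [IsCyclotomicExtension {p} ℚ L] (hp2 : p ≠ 2) {ζ : L} (hζ : IsPrimitiveRoot ζ p) {t : K}
    (ht : algebraMap K L t = ζ + ζ⁻¹) (hgen : ℚ⟮t⟯ = ⊤) {σ : ι → K →+* ℝ}
    (hσ : Function.Bijective σ) {S : Set K} (hS : ∀ y ∈ S, IsIntegral ℤ y) {u : (𝓞 K)ˣ}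
    (hu : (u : K) ∈ S) :
    IsLeast {x : ℝ | ∃ y ∈ S, y ≠ 0 ∧ x = ∏ i, √(σ i (2 - t) / (2 * p)) * |σ i y|}
      ((2 : ℝ) ^ ((1 - p : ℝ) / 4) * (p : ℝ) ^ ((3 - p : ℝ) / 4)) := by
  have : FiniteDimensional ℚ L := IsCyclotomicExtension.finiteDimensional {p} ℚ L
  have : FiniteDimensional K L := FiniteDimensional.right ℚ K L
  have : NumberField K := { to_finiteDimensional := FiniteDimensional.left ℚ K L }
  have : IsTotallyReal K :=
    isTotallyReal_of_adjoin_add_inv_eq_top hp.out.ne_zero hζ.pow_eq_one ht hgen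
  have hnonneg (i : ι) : 0 ≤ σ i (2 - t) := by
    rw [map_sub, map_ofNat, sub_nonneg]
    exact realEmbedding_add_inv_le_two hp.out.ne_zero hζ.pow_eq_one ht (σ i)
  have hdeg : 2 * (Module.finrank ℚ K : ℝ) = p - 1 := by
    rw [← Nat.cast_pred hp.out.pos, ← Nat.totient_prime hp.out]
    exact_mod_cast two_mul_finrank_eq_totient hζ (hp.out.two_le.lt_of_ne' hp2) ht
  have hvalue : √(Algebra.norm ℚ (2 - t) / (2 * p) ^ Module.finrank ℚ K) =
      (2 : ℝ) ^ ((1 - p : ℝ) / 4) * (p : ℝ) ^ ((3 - p : ℝ) / 4) := by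
    rw [norm_two_sub_add_inv hζ hp2 ht, Rat.cast_natCast,
      sqrt_div_mul_pow_eq_rpow_mul_rpow two_pos (mod_cast hp.out.pos)]
    congr 2 <;> linarith
  exact hvalue ▸ isLeast_prod_sqrt_mul_abs hσ hnonneg (by positivity) hS hu

theorem relative_minimum_product_distance_Dn_odd_prime_general {ι : Type*} [Fintype ι] {p : ℕ}
    (hp : p.Prime) (hp2 : p ≠ 2) {ζ : ℂ} (hζ : IsPrimitiveRoot ζ p) {α : ℚ⟮ζ + ζ⁻¹⟯}
    (hα : (α : ℂ) = 2 - (ζ + ζ⁻¹)) {σ : ι → ℚ⟮ζ + ζ⁻¹⟯ →+* ℝ} (hσ : Function.Bijective σ)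
    {S : Set ℚ⟮ζ + ζ⁻¹⟯} (hS : ∀ y ∈ S, IsIntegral ℤ y) {u : (𝓞 ℚ⟮ζ + ζ⁻¹⟯)ˣ}
    (hu : (u : ℚ⟮ζ + ζ⁻¹⟯) ∈ S) :
    IsLeast {x : ℝ | ∃ y ∈ S, y ≠ 0 ∧ x = ∏ i, √(σ i α / (2 * p)) * |σ i y|}
      ((2 : ℝ) ^ ((1 - p : ℝ) / 4) * (p : ℝ) ^ ((3 - p : ℝ) / 4)) := by
  have : Fact p.Prime := ⟨hp⟩
  have : IsCyclotomicExtension {p} ℚ ℚ⟮ζ⟯ := isCyclotomicExtension_adjoin_simple ℚ hζ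
  have hgen : IsPrimitiveRoot (AdjoinSimple.gen ℚ ζ) p :=
    IsPrimitiveRoot.coe_submonoidClass_iff.1 hζ
  let _ : Algebra ℚ⟮ζ + ζ⁻¹⟯ ℚ⟮ζ⟯ := (inclusion (adjoin_add_inv_le ℚ ζ)).toRingHom.toAlgebra
  obtain rfl : α = 2 - AdjoinSimple.gen ℚ (ζ + ζ⁻¹) := Subtype.ext hα
  exact isLeast_prod_sqrt_two_sub_add_inv_mul_abs hp2 hgen rfl
    (adjoin_adjoinSimple_gen_eq_top ℚ (ζ + ζ⁻¹)) hσ hS hu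

/-- With `K = ℚ(ζ + ζ⁻¹)` for `ζ` a primitive `p`-th root of unity
(`p ≥ 7` prime), `n = (p-1)/2`, `α = 2 - e₁`, `σ₁, …, σₙ` the real embeddings of `K`,
and `I` the `ℤ`-span of `{e₁, …, e_{n-1}, 2eₙ}`, the set
`{ ∏ᵢ √(σᵢ(α)/(2p)) · |σᵢ y| : y ∈ I, y ≠ 0 }` has least element
`2^{(1-p)/4} · p^{(3-p)/4}`. -/
theorem relative_minimum_product_distance_Dn_odd_prime
    (p n : ℕ) (hp : p.Prime) (hp7 : 7 ≤ p) (hn : p = 2 * n + 1)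
    (ζ : ℂ) (hζ : IsPrimitiveRoot ζ p)
    (e : ℕ → ℚ⟮ζ + ζ⁻¹⟯)
    (he : ∀ j : ℕ, 1 ≤ j → ((e j : ℂ) = ζ ^ j + ζ⁻¹ ^ j))
    (α : ℚ⟮ζ + ζ⁻¹⟯) (hα : α = 2 - e 1)
    (σ : Fin n → (ℚ⟮ζ + ζ⁻¹⟯ →+* ℝ)) (hσ : Function.Bijective σ)
    (I : Submodule ℤ ℚ⟮ζ + ζ⁻¹⟯)
    (hI : I = Submodule.span ℤ
      ((e '' {i : ℕ | 1 ≤ i ∧ i ≤ n - 1}) ∪ {2 * e n})) :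
    IsLeast { x : ℝ | ∃ y ∈ I, y ≠ 0 ∧
        x = ∏ i, Real.sqrt (σ i α / (2 * p)) * |σ i y| }
      ((2 : ℝ) ^ (((1 : ℝ) - p) / 4) * (p : ℝ) ^ (((3 : ℝ) - p) / 4)) := by
  
  subst hI hα
  have he1 : algebraMap ℚ⟮ζ + ζ⁻¹⟯ ℂ (e 1) = ζ + ζ⁻¹ := by simpa using he 1 le_rfl
  obtain ⟨u, hu⟩ := exists_units_coe_eq_of_add_inv hζ ⟨n, hn⟩ hp.one_lt he1
  have he_int (j : ℕ) (hj : 1 ≤ j) : IsIntegral ℤ (e j) :=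
    isIntegral_of_algebraMap_eq_pow_add_inv_pow hp.pos hζ (he j hj)
  refine relative_minimum_product_distance_Dn_odd_prime_general (u := u) hp (by lia) hζ
    (congrArg (2 - ·) he1) hσ (fun y ↦ isIntegral_of_mem_span ?_) ?_
  · rintro _ (⟨j, hj, rfl⟩ | rfl)
    · exact he_int j hj.1
    · exact (integralClosure ℤ _).mul_mem (ofNat_mem _ 2) (he_int n (by lia))
  · exact hu ▸ Submodule.subset_span (.inl ⟨1, ⟨le_rfl, by lia⟩, rfl⟩)
end
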